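/- arXiv:1302.4251 — 2 statements merged into one kernel-verified Lean document; each statement's English description precedes it below -/
import Mathlib

section
/- Let q be a prime number, s ∈ ℕ, m ∈ ℕ, and let k₁,…,k_s ∈ ℕ₀, not all of them 0. Let M_m(k₁,…,k_s) = {(C₁,…,C_s) ∈ ((ZMod q)^{ℕ×ℕ})^s : ν(C₁ᵀk⃗₁ + ⋯ + C_sᵀk⃗_s) ≤ −m}, i.e. the set of matrix tuples for which the first m−1 coordinates of the vector C₁ᵀk⃗₁ + ⋯ + C_sᵀk⃗_s ∈ (ZMod q)^ℕ all vanish. Then μ_s(M_m(k₁,…,k_s)) = q^{−(m−1)}. -/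
open MeasureTheory Filter
open scoped ENNReal

noncomputable section

/-- The base-`q` digit vector `k⃗ = (κ₀, κ₁, κ₂, …)` of a natural number `k`,
with values in `ZMod q`. -/
def digitVec (q k : ℕ) : ℕ → ZMod q := fun i => ((k / q ^ i) % q : ℕ)

/-- `len q k = ⌊log_q k⌋`, the index of the leading base-`q` digit of `k`. -/
def len (q k : ℕ) : ℕ := Nat.log q k

/-- Transpose of an `ℕ × ℕ` matrix over `ZMod q`. -/
def transp {q : ℕ} (C : ℕ → ℕ → ZMod q) : ℕ → ℕ → ZMod q := fun i j => C j i

/-- The matrix `C` applied to the digit vector of `k` (a finite sum, since the digit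
vector of `k` is supported on indices `≤ k`), all arithmetic modulo `q`. -/
def matVec {q : ℕ} (C : ℕ → ℕ → ZMod q) (k : ℕ) : ℕ → ZMod q :=
  fun i => ∑ j ∈ Finset.range (k + 1), C i j * digitVec q k j

/-- `nuLe b m` expresses `ν(b⃗) ≤ -m` for `b⃗ = (b₁, b₂, …) = (b 0, b 1, …)`:
the first `m - 1` coordinates of `b⃗` vanish.  (In particular it holds for `b⃗ = 0⃗`,
where `ν(0⃗) = -∞`.) -/
def nuLe {q : ℕ} (b : ℕ → ZMod q) (m : ℕ) : Prop := ∀ i, i < m - 1 → b i = 0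

/-- `ω_q = exp(2πi/q)`. -/
def omega (q : ℕ) : ℂ := Complex.exp (2 * Real.pi * Complex.I / q)

/-- The value of the `j`-th `q`-adic Walsh function on a digit vector
`v⃗ = (v₁, v₂, …) = (v 0, v 1, …)`: with `j = j₀ + j₁ q + ⋯`, this is
`ω_q^(j₀ v₁ + j₁ v₂ + ⋯)`, the exponent computed in `ZMod q` (a finite sum, since all
base-`q` digits of `j` with index `≥ j` vanish). -/
def wal (q j : ℕ) (v : ℕ → ZMod q) : ℂ :=
  omega q ^ (∑ i ∈ Finset.range (j + 1), digitVec q j i * v i).val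

/-- The digit `ξ_{i+1} ∈ ZMod q` of the `q`-adic expansion
`x = ξ₁ q⁻¹ + ξ₂ q⁻² + ⋯` of `x ∈ [0,1)` (the expansion with infinitely many digits
different from `q - 1`). -/
def realDigit (q : ℕ) (x : ℝ) : ℕ → ZMod q := fun i => ((⌊x * (q : ℝ) ^ (i + 1)⌋ : ℤ) : ZMod q)

/-- The `j`-th `q`-adic Walsh function `wal_j : [0,1) → ℂ`. -/
def walReal (q j : ℕ) (x : ℝ) : ℂ := wal q j (realDigit q x)

/-- The digital sequence over `ZMod q` with generating matrices `C 1, …, C s`: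
the `j`-th coordinate of the `n`-th point is `x_{n,j} = Σ_i (C_j n⃗)_i q^{-(i+1)}`. -/
def digitalSeq {q s : ℕ} (C : Fin s → ℕ → ℕ → ZMod q) (n : ℕ) : Fin s → ℝ :=
  fun j => ∑' i : ℕ, ((matVec (C j) n i).val : ℝ) / (q : ℝ) ^ (i + 1)

/-- The local discrepancy `D(x, N)` of the sequence `y` in `[0,1)^s`. -/
def localDisc {s : ℕ} (y : ℕ → Fin s → ℝ) (x : Fin s → ℝ) (N : ℕ) : ℝ :=
  (Nat.card {n : ℕ | n < N ∧ ∀ j, y n j ∈ Set.Ico 0 (x j)} : ℝ) - N * ∏ j, x j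

/-- The star discrepancy `D*_N` of the sequence `y` in `[0,1)^s`. -/
def starDisc {s : ℕ} (y : ℕ → Fin s → ℝ) (N : ℕ) : ℝ :=
  sSup {d : ℝ | ∃ x : Fin s → ℝ, (∀ j, x j ∈ Set.Icc (0 : ℝ) 1) ∧ d = |localDisc y x N|}

/-- `IsUniformMatrixMeasure μ` says that `μ` is the measure `μ` of the paper on the
space `(ZMod q)^{ℕ×ℕ}` of `ℕ × ℕ` matrices over `ZMod q`: the product over `ℕ × ℕ` of
uniform probability measures on `ZMod q`, characterized as the probability measure
giving each finite cylinder set (finitely many prescribed entries) the measure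
`q^{-(number of prescribed entries)}`. -/
def IsUniformMatrixMeasure {q : ℕ} (μ : Measure (ℕ → ℕ → ZMod q)) : Prop :=
  IsProbabilityMeasure μ ∧
    ∀ (F : Finset (ℕ × ℕ)) (g : ℕ × ℕ → ZMod q),
      μ {C | ∀ p ∈ F, C p.1 p.2 = g p} = ((q : ℝ≥0∞)⁻¹) ^ F.card

/-- `IsUniformMatrixTupleMeasure μs` says that `μs` is the measure `μ_s` of the paper on
the space `((ZMod q)^{ℕ×ℕ})^s` of `s`-tuples of `ℕ × ℕ` matrices over `ZMod q`: the
`s`-fold product of the product over `ℕ × ℕ` of uniform probability measures on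
`ZMod q`, characterized as the probability measure giving each finite cylinder set
(finitely many prescribed entries) the measure `q^{-(number of prescribed entries)}`. -/
def IsUniformMatrixTupleMeasure {q s : ℕ} (μs : Measure (Fin s → ℕ → ℕ → ZMod q)) : Prop :=
  IsProbabilityMeasure μs ∧
    ∀ (F : Finset (Fin s × ℕ × ℕ)) (g : Fin s × ℕ × ℕ → ZMod q),
      μs {C | ∀ p ∈ F, C p.1 p.2.1 p.2.2 = g p} = ((q : ℝ≥0∞)⁻¹) ^ F.card

lemma digitVec_log_ne (q k : ℕ) (hq : q.Prime) (hk : k ≠ 0) :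
    digitVec q k (Nat.log q k) ≠ 0 := by
  unfold digitVec
  have h1 : k / q ^ Nat.log q k < q := by
    apply Nat.div_lt_of_lt_mul
    rw [← pow_succ]
    exact Nat.lt_pow_succ_log_self hq.one_lt k
  have h2 : 0 < k / q ^ Nat.log q k :=
    Nat.div_pos (Nat.pow_log_le_self q hk) (pow_pos hq.pos _)
  rw [Nat.mod_eq_of_lt h1]
  intro h
  rw [ZMod.natCast_eq_zero_iff] at h
  exact absurd (Nat.le_of_dvd h2 h) (by omega)

/-- Extension by zero. -/
def extZ {q s : ℕ} (G : Finset (Fin s × ℕ × ℕ)) (h : G → ZMod q) (p : Fin s × ℕ × ℕ) : ZMod q :=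
  if hp : p ∈ G then h ⟨p, hp⟩ else 0

lemma measurable_cyl {q s : ℕ} (hq : q.Prime) (F : Finset (Fin s × ℕ × ℕ))
    (g : Fin s × ℕ × ℕ → ZMod q) :
    MeasurableSet {C : Fin s → ℕ → ℕ → ZMod q | ∀ p ∈ F, C p.1 p.2.1 p.2.2 = g p} := by
  have : {C : Fin s → ℕ → ℕ → ZMod q | ∀ p ∈ F, C p.1 p.2.1 p.2.2 = g p}
      = ⋂ p ∈ F, (fun C : Fin s → ℕ → ℕ → ZMod q => C p.1 p.2.1 p.2.2) ⁻¹' {g p} := by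
    ext C; simp
  rw [this]
  refine Finset.measurableSet_biInter _ fun p _ => ?_
  have hm : Measurable (fun C : Fin s → ℕ → ℕ → ZMod q => C p.1 p.2.1 p.2.2) := by fun_prop
  exact hm (measurableSet_singleton _)

/-- **Lemma 2.**  For `m ∈ ℕ` and `k₁, …, k_s ∈ ℕ₀` not all `0`, the set
`M_m(k₁,…,k_s) = {(C₁,…,C_s) : ν(C₁ᵀk⃗₁ + ⋯ + C_sᵀk⃗_s) ≤ −m}` has measure
`μ_s(M_m(k₁,…,k_s)) = q^{−(m−1)}`. -/
theorem measure_nuLe_set (q s m : ℕ) (hq : q.Prime) (hs : 1 ≤ s) (hm : 1 ≤ m)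
    (k : Fin s → ℕ) (hk : ∃ u, k u ≠ 0)
    (μs : Measure (Fin s → ℕ → ℕ → ZMod q)) (hμs : IsUniformMatrixTupleMeasure μs) :
    μs {C : Fin s → ℕ → ℕ → ZMod q |
        nuLe (fun i => ∑ u, matVec (transp (C u)) (k u) i) m}
      = ((q : ℝ≥0∞)⁻¹) ^ (m - 1) := by
  haveI : Fact q.Prime := ⟨hq⟩
  haveI : NeZero q := ⟨hq.ne_zero⟩
  obtain ⟨u0, hu0⟩ := hk
  obtain ⟨-, hcyl⟩ := hμs
  set n := m - 1 with hn
  set j0 := Nat.log q (k u0) with hj0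
  have hc := digitVec_log_ne q (k u0) hq hu0
  rw [← hj0] at hc
  set c := digitVec q (k u0) j0 with hcdef
  have hj0r : j0 < k u0 + 1 := Nat.lt_succ_of_le (Nat.log_le_self _ _)
  let G : Finset (Fin s × ℕ × ℕ) :=
    ((Finset.univ : Finset (Fin s)) ×ˢ (Finset.range (∑ u, k u + 1) ×ˢ Finset.range n)).filter
      (fun p => ¬ (p.1 = u0 ∧ p.2.1 = j0))
  let H : Finset (Fin s × ℕ × ℕ) := (Finset.range n).image (fun i => (u0, j0, i))
  have hGmem : ∀ u j i, j < k u + 1 → i < n → ¬ (u = u0 ∧ j = j0) → (u, j, i) ∈ G := by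
    intro u j i hj hi hne
    have : k u ≤ ∑ u, k u := Finset.single_le_sum (fun _ _ => Nat.zero_le _) (Finset.mem_univ u)
    simp only [G, Finset.mem_filter, Finset.mem_product, Finset.mem_univ, Finset.mem_range,
      true_and]
    exact ⟨⟨by omega, hi⟩, hne⟩
  have hGn : ∀ i, (u0, j0, i) ∉ G := by
    intro i; simp [G]
  have hHcard : H.card = n := by
    rw [Finset.card_image_of_injective _ (fun a b h => by simpa using h), Finset.card_range]
  have hdisj : Disjoint G H := by
    rw [Finset.disjoint_right]
    intro p hp
    obtain ⟨i, -, rfl⟩ := Finset.mem_image.1 hp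
    exact hGn i
  let R : (G → ZMod q) → ℕ → ZMod q := fun h i =>
    ∑ u, ∑ j ∈ Finset.range (k u + 1), extZ G h (u, j, i) * digitVec q (k u) j
  let g : (G → ZMod q) → Fin s × ℕ × ℕ → ZMod q := fun h p =>
    if p ∈ G then extZ G h p else -c⁻¹ * R h p.2.2
  let Cy : (G → ZMod q) → Set (Fin s → ℕ → ℕ → ZMod q) := fun h =>
    {C | ∀ p ∈ G ∪ H, C p.1 p.2.1 p.2.2 = g h p}
  have key : ∀ (C : Fin s → ℕ → ℕ → ZMod q) (h : G → ZMod q),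
      (∀ p ∈ G, C p.1 p.2.1 p.2.2 = extZ G h p) → ∀ i < n,
      ∑ u, matVec (transp (C u)) (k u) i = c * C u0 j0 i + R h i := by
    intro C h hC i hi
    have e : ∀ u, matVec (transp (C u)) (k u) i = (if u = u0 then c * C u0 j0 i else 0)
        + ∑ j ∈ Finset.range (k u + 1), extZ G h (u, j, i) * digitVec q (k u) j := by
      intro u
      have e2 : (if u = u0 then c * C u0 j0 i else 0) = ∑ j ∈ Finset.range (k u + 1),
          (if j = j0 then (if u = u0 then c * C u0 j0 i else 0) else 0) := by
        rw [Finset.sum_ite_eq']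
        by_cases hu : u = u0
        · subst hu; simp [hj0r]
        · simp [hu]
      rw [e2, ← Finset.sum_add_distrib]
      unfold matVec transp
      refine Finset.sum_congr rfl fun j hj => ?_
      by_cases hb : u = u0 ∧ j = j0
      · obtain ⟨h1, h2⟩ := hb
        rw [h1, h2]
        have : extZ G h (u0, j0, i) = 0 := by simp [extZ, hGn i]
        simp [this, ← hcdef, mul_comm]
      · have hh := hC _ (hGmem u j i (Finset.mem_range.1 hj) hi hb)
        simp only at hh
        rw [hh]
        by_cases h2 : j = j0
        · have : u ≠ u0 := fun h1 => hb ⟨h1, h2⟩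
          simp [this]
        · simp [h2]
    rw [Finset.sum_congr rfl (fun u _ => e u), Finset.sum_add_distrib]
    simp [R]
  have hset : {C : Fin s → ℕ → ℕ → ZMod q |
        nuLe (fun i => ∑ u, matVec (transp (C u)) (k u) i) m} = ⋃ h, Cy h := by
    ext C
    simp only [Set.mem_setOf_eq, Set.mem_iUnion, nuLe, Cy, ← hn]
    constructor
    · intro hC
      let h : G → ZMod q := fun p => C p.1.1 p.1.2.1 p.1.2.2
      have hG : ∀ p ∈ G, C p.1 p.2.1 p.2.2 = extZ G h p := by
        intro p hp; simp [extZ, hp, h]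
      refine ⟨h, fun p hp => ?_⟩
      rcases Finset.mem_union.1 hp with hp | hp
      · simp only [g, if_pos hp]; exact hG p hp
      · obtain ⟨i, hi, rfl⟩ := Finset.mem_image.1 hp
        have h1 := hC i (Finset.mem_range.1 hi)
        rw [key C h hG i (Finset.mem_range.1 hi)] at h1
        simp only [g, if_neg (hGn i)]
        field_simp
        linear_combination h1
    · rintro ⟨h, hC⟩ i hi
      have hG : ∀ p ∈ G, C p.1 p.2.1 p.2.2 = extZ G h p := by
        intro p hp
        rw [hC p (Finset.mem_union_left _ hp)]
        simp only [g, if_pos hp]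
      rw [key C h hG i hi]
      have h1 := hC (u0, j0, i) (Finset.mem_union_right _
        (Finset.mem_image.2 ⟨i, Finset.mem_range.2 hi, rfl⟩))
      simp only [g, if_neg (hGn i)] at h1
      rw [h1]
      field_simp
      ring
  have hpd : Pairwise (Function.onFun Disjoint Cy) := by
    intro h h' hne
    rw [Function.onFun, Set.disjoint_left]
    intro C h1 h2
    apply hne
    funext p
    have a := (h1 p.1 (Finset.mem_union_left _ p.2)).symm.trans
      (h2 p.1 (Finset.mem_union_left _ p.2))
    simpa [g, extZ] using a
  rw [hset, measure_iUnion hpd (fun h => measurable_cyl hq _ _), tsum_fintype,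
    Finset.sum_congr rfl (fun h _ => hcyl (G ∪ H) (g h)), Finset.sum_const,
    Finset.card_union_of_disjoint hdisj, hHcard, Finset.card_univ, Fintype.card_fun, ZMod.card,
    Fintype.card_coe, nsmul_eq_mul, Nat.cast_pow, pow_add, ← mul_assoc, ← mul_pow,
    ENNReal.mul_inv_cancel (by exact_mod_cast hq.ne_zero) (ENNReal.natCast_ne_top q), one_pow,
    one_mul]
end
end

section
/- Let q be a prime number, s ∈ ℕ, and let P ⊆ ℕ^s be a set containing no two strongly dependent elements over ZMod q. Let F : ℕ₀^s → ℕ be such that Σ_{(k₁,…,k_s)∈P} q^{−F(len(k₁),…,len(k_s))} = ∞. Then the set M̄ of tuples (C₁,…,C_s) ∈ ((ZMod q)^{ℕ×ℕ})^s for which ν(C₁ᵀk⃗₁ + ⋯ + C_sᵀk⃗_s) ≤ −F(len(k₁),…,len(k_s)) holds for infinitely many (k₁,…,k_s) ∈ P has full measure: μ_s(M̄) = 1. -/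
open MeasureTheory Filter
open scoped ENNReal

noncomputable section

lemma bc_aux {Ω ι : Type*} [MeasurableSpace Ω] (μ : Measure Ω) [IsProbabilityMeasure μ]
    (A : ι → Set Ω) (hA : ∀ i, MeasurableSet (A i))
    (hind : ∀ i j, i ≠ j → μ (A i ∩ A j) = μ (A i) * μ (A j))
    (T : Finset ι) (n : ℕ) (hn : 2 * (n : ℝ) < ∑ i ∈ T, μ.real (A i)) :
    μ {ω | {i | ω ∈ A i}.encard ≤ n} ≤ ENNReal.ofReal (4 / ∑ i ∈ T, μ.real (A i)) := by
  classical
  set m := ∑ i ∈ T, μ.real (A i) with hm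
  have hn0 : (0:ℝ) ≤ n := Nat.cast_nonneg n
  have hm0 : 0 < m := by linarith
  let X : ι → Ω → ℝ := fun i => (A i).indicator 1
  have hX : ∀ i, MemLp (X i) 2 μ := fun i =>
    memLp_indicator_const 2 (hA i) (1:ℝ) (Or.inr (measure_ne_top _ _))
  have hEX : ∀ i, ∫ ω, X i ω ∂μ = μ.real (A i) := fun i => integral_indicator_one (hA i)
  have hXX : ∀ i j, X i * X j = (A i ∩ A j).indicator 1 := by
    intro i j
    rw [Set.inter_indicator_one]
  have hcov : ∀ i j, i ≠ j → ProbabilityTheory.covariance (X i) (X j) μ = 0 := by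
    intro i j hij
    rw [ProbabilityTheory.covariance_eq_sub (hX i) (hX j), hXX, hEX, hEX,
      integral_indicator_one ((hA i).inter (hA j))]
    simp [Measure.real, hind i j hij]
  have hcov2 : ∀ i, ProbabilityTheory.covariance (X i) (X i) μ ≤ μ.real (A i) := by
    intro i
    rw [ProbabilityTheory.covariance_eq_sub (hX i) (hX i), hXX, hEX,
      integral_indicator_one ((hA i).inter (hA i)), Set.inter_self]
    nlinarith [mul_self_nonneg (μ.real (A i))]
  have hvar : ProbabilityTheory.variance (∑ i ∈ T, X i) μ ≤ m := by
    rw [ProbabilityTheory.variance_sum' (fun i _ => hX i)]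
    refine Finset.sum_le_sum fun i hi => ?_
    rw [Finset.sum_eq_single i]
    · exact hcov2 i
    · intro j _ hj; exact hcov _ _ hj.symm
    · intro h; exact absurd hi h
  have hES : ∫ ω, (∑ i ∈ T, X i) ω ∂μ = m := by
    simp only [Finset.sum_apply]
    rw [integral_finset_sum]
    · simp only [hEX]; rfl
    · intro i _; exact (hX i).integrable (by norm_num)
  have hS : MemLp (∑ i ∈ T, X i) 2 μ := memLp_finsetSum' _ fun i _ => hX i
  have hc : 0 < m / 2 := by linarith
  have key := ProbabilityTheory.meas_ge_le_variance_div_sq hS hc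
  refine (measure_mono ?_).trans (key.trans (ENNReal.ofReal_le_ofReal ?_))
  · intro ω hω
    simp only [Set.mem_ofPred_eq] at hω ⊢
    rw [hES]
    have h1 : (∑ i ∈ T, X i) ω = ((T.filter fun i => ω ∈ A i).card : ℝ) := by
      rw [Finset.sum_apply, Finset.card_filter]
      push_cast
      refine Finset.sum_congr rfl fun i _ => ?_
      simp [X, Set.indicator_apply]
    have h2 : (T.filter fun i => ω ∈ A i).card ≤ n := by
      have : ((T.filter fun i => ω ∈ A i : Finset ι) : Set ι).encard ≤ n :=
        (Set.encard_le_encard (by intro i; simp)).trans hω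
      rw [Set.encard_coe_eq_coe_finsetCard] at this
      exact_mod_cast this
    have h3 : ((T.filter fun i => ω ∈ A i).card : ℝ) ≤ n := by exact_mod_cast h2
    rw [h1, abs_sub_comm]
    refine le_trans ?_ (le_abs_self _)
    linarith
  · rw [div_le_div_iff₀ (by positivity) hm0]
    nlinarith

lemma bc {Ω ι : Type*} [MeasurableSpace Ω] (μ : Measure Ω) [IsProbabilityMeasure μ]
    (A : ι → Set Ω) (hA : ∀ i, MeasurableSet (A i))
    (hind : ∀ i j, i ≠ j → μ (A i ∩ A j) = μ (A i) * μ (A j))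
    (hsum : ∑' i, μ (A i) = ⊤) : ∀ᵐ ω ∂μ, {i | ω ∈ A i}.Infinite := by
  have hbig : ∀ r : ℝ, ∃ T : Finset ι, r < ∑ i ∈ T, μ.real (A i) := by
    intro r
    have h : ENNReal.ofReal r < ∑' i, μ (A i) := by rw [hsum]; exact ENNReal.ofReal_lt_top
    rw [ENNReal.tsum_eq_iSup_sum] at h
    obtain ⟨T, hT⟩ := lt_iSup_iff.1 h
    refine ⟨T, ?_⟩
    have e : ∑ i ∈ T, μ (A i) = ENNReal.ofReal (∑ i ∈ T, μ.real (A i)) := by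
      rw [ENNReal.ofReal_sum_of_nonneg (fun _ _ => measureReal_nonneg)]
      simp
    rw [e] at hT
    exact (ENNReal.ofReal_lt_ofReal_iff'.1 hT).1
  have hz : ∀ n : ℕ, μ {ω | {i | ω ∈ A i}.encard ≤ n} = 0 := by
    intro n
    by_contra hne
    set S := {ω | {i | ω ∈ A i}.encard ≤ n}
    have hr : 0 < μ.real S := ENNReal.toReal_pos hne (measure_ne_top _ _)
    obtain ⟨T, hT⟩ := hbig (max (2 * n) (4 / μ.real S))
    have h1 : 2 * (n:ℝ) < _ := (le_max_left _ _).trans_lt hT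
    have h2 := (le_max_right _ _).trans_lt hT
    have h3 := bc_aux μ A hA hind T n h1
    have hpos : 0 < ∑ i ∈ T, μ.real (A i) := (by positivity : 0 < 4 / μ.real S).trans h2
    have h4 : μ.real S ≤ 4 / ∑ i ∈ T, μ.real (A i) :=
      ENNReal.toReal_le_of_le_ofReal (by positivity) h3
    rw [div_lt_iff₀ hr] at h2
    rw [le_div_iff₀ hpos] at h4
    linarith
  have : ∀ᵐ ω ∂μ, ∀ n : ℕ, ¬ {i | ω ∈ A i}.encard ≤ n := by
    rw [ae_all_iff]
    intro n
    rw [ae_iff]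
    simpa using hz n
  filter_upwards [this] with ω hω hfin
  exact hω hfin.toFinset.card (by rw [hfin.encard_eq_coe_toFinset_card])

lemma unif {q s : ℕ} [NeZero q] (μs : Measure (Fin s → ℕ → ℕ → ZMod q))
    (hμ : IsProbabilityMeasure μs)
    (hμs : ∀ (F : Finset (Fin s × ℕ × ℕ)) (g : Fin s × ℕ × ℕ → ZMod q),
      μs {C | ∀ p ∈ F, C p.1 p.2.1 p.2.2 = g p} = ((q : ℝ≥0∞)⁻¹) ^ F.card)
    {V : Type*} [AddCommGroup V] [Fintype V]
    (L : (Fin s → ℕ → ℕ → ZMod q) →+ V) (hL : Function.Surjective L)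
    (F : Finset (Fin s × ℕ × ℕ)) (hF : ∀ C, (∀ p ∈ F, C p.1 p.2.1 p.2.2 = 0) → L C = 0) (v : V) :
    MeasurableSet {C | L C = v} ∧ μs {C | L C = v} = (Fintype.card V : ℝ≥0∞)⁻¹ := by
  classical
  let R : (Fin s → ℕ → ℕ → ZMod q) → (F → ZMod q) := fun C p => C p.1.1 p.1.2.1 p.1.2.2
  let E : (F → ZMod q) →+ (Fin s → ℕ → ℕ → ZMod q) :=
    { toFun := fun g u i j => if h : (u, i, j) ∈ F then g ⟨_, h⟩ else 0
      map_zero' := by ext; simp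
      map_add' := by intro a b; ext u i j; by_cases h : (u, i, j) ∈ F <;> simp [h] }
  have hR : Measurable R := by fun_prop
  have hLE : ∀ C, L C = L (E (R C)) := by
    intro C
    rw [← sub_eq_zero, ← map_sub]
    apply hF
    rintro ⟨u, i, j⟩ hp
    simp [E, R, hp]
  have hset : ∀ v, {C | L C = v} = R ⁻¹' {g | L (E g) = v} := by
    intro v; ext C; simp [hLE C]
  have hmeas : ∀ v, MeasurableSet {C | L C = v} := by
    intro v; rw [hset]; exact hR (Set.toFinite _).measurableSet
  refine ⟨hmeas v, ?_⟩
  have hsing : ∀ g, μs (R ⁻¹' {g}) = ((q : ℝ≥0∞)⁻¹) ^ F.card := by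
    intro g
    rw [← hμs F (fun p => if h : p ∈ F then g ⟨p, h⟩ else 0)]
    congr 1
    ext C
    simp only [Set.mem_preimage, Set.mem_singleton_iff, Set.mem_ofPred_eq, funext_iff, R]
    constructor
    · intro h p hp; simp [hp, ← h]
    · rintro h ⟨p, hp⟩; simp [h p hp, hp]
  have hcount : ∀ v, μs {C | L C = v} =
      (Finset.univ.filter fun g => (L.comp E) g = v).card * ((q : ℝ≥0∞)⁻¹) ^ F.card := by
    intro v
    have : {C | L C = v} = ⋃ g ∈ (Finset.univ.filter fun g => (L.comp E) g = v), R ⁻¹' {g} := by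
      rw [hset]; ext C; simp
    rw [this, measure_biUnion_finset]
    · simp [hsing]
    · intro a _ b _ hab
      exact Disjoint.preimage _ (by simpa using hab)
    · intro g _; exact hR (measurableSet_singleton g)
  have hsurj : ∀ v, v ∈ Set.range (L.comp E) := by
    intro v; obtain ⟨C, rfl⟩ := hL v; exact ⟨R C, (hLE C).symm⟩
  have hconst : ∀ w, μs {C | L C = w} = μs {C | L C = v} := by
    intro w
    rw [hcount, hcount, AddMonoidHom.card_fiber_eq_of_mem_range (L.comp E) (hsurj w) (hsurj v)]
  have htot : (1 : ℝ≥0∞) = ∑ w : V, μs {C | L C = w} := by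
    rw [← measure_biUnion_finset]
    · rw [← measure_univ (μ := μs)]; congr 1; ext C; simp
    · intro a _ b _ hab
      rw [Function.onFun, Set.disjoint_left]
      rintro C h1 h2
      exact hab (h1.symm.trans h2)
    · intro w _; exact hmeas w
  simp only [hconst, Finset.sum_const, Finset.card_univ, nsmul_eq_mul] at htot
  exact ENNReal.eq_inv_of_mul_eq_one_left (by rw [mul_comm]; exact htot.symm)

lemma digit_zero_of_lt {q : ℕ} (hq : q.Prime) {k j : ℕ} (h : k < j) : digitVec q k j = 0 := by
  have : k / q ^ j = 0 := Nat.div_eq_of_lt (h.trans (Nat.lt_pow_self hq.one_lt))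
  simp [digitVec, this]

lemma exists_digit_ne {q : ℕ} (hq : q.Prime) {k : ℕ} (h : 1 ≤ k) : ∃ j, digitVec q k j ≠ 0 := by
  refine ⟨Nat.log q k, ?_⟩
  have h1 : 0 < k / q ^ Nat.log q k :=
    Nat.div_pos (Nat.pow_log_le_self q (by omega)) (pow_pos hq.pos _)
  have h2 : k / q ^ Nat.log q k < q := by
    apply Nat.div_lt_of_lt_mul
    have := Nat.lt_pow_succ_log_self hq.one_lt k
    rwa [pow_succ] at this
  simp only [digitVec, Nat.mod_eq_of_lt h2]
  rw [Ne, ZMod.natCast_eq_zero_iff]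
  exact Nat.not_dvd_of_pos_of_lt h1 h2

def pr {s : ℕ} (q : ℕ) (k : Fin s → ℕ) : (Fin s → ℕ → ZMod q) →ₗ[ZMod q] ZMod q where
  toFun f := ∑ u, ∑ j ∈ Finset.range (k u + 1), f u j * digitVec q (k u) j
  map_add' f g := by simp [add_mul, Finset.sum_add_distrib]
  map_smul' c f := by simp [Finset.mul_sum, mul_assoc]

def dl {s q : ℕ} (u : Fin s) (j : ℕ) : Fin s → ℕ → ZMod q :=
  fun u' j' => if u' = u ∧ j' = j then 1 else 0

lemma pr_dl {s q : ℕ} (hq : q.Prime) (k : Fin s → ℕ) (u : Fin s) (j : ℕ) :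
    pr q k (dl u j) = digitVec q (k u) j := by
  simp only [pr, dl, LinearMap.coe_mk, AddHom.coe_mk]
  rw [Finset.sum_eq_single u]
  · by_cases h : j < k u + 1
    · rw [Finset.sum_eq_single j]
      · simp
      · intro b _ hb; simp [hb]
      · intro h'; exact absurd (Finset.mem_range.2 h) h'
    · rw [digit_zero_of_lt hq (by omega)]
      refine Finset.sum_eq_zero fun b hb => ?_
      have : b ≠ j := by have := Finset.mem_range.1 hb; omega
      simp [this]
  · intro b _ hb; simp [hb]
  · simp

lemma exists_one {s q : ℕ} (hq : q.Prime) (hs : 1 ≤ s) (k : Fin s → ℕ) (hk : ∀ j, 1 ≤ k j) :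
    ∃ f, pr q k f = 1 := by
  haveI := Fact.mk hq
  obtain ⟨j, hj⟩ := exists_digit_ne hq (hk ⟨0, hs⟩)
  refine ⟨(digitVec q (k ⟨0, hs⟩) j)⁻¹ • dl ⟨0, hs⟩ j, ?_⟩
  rw [map_smul, pr_dl hq, smul_eq_mul, inv_mul_cancel₀ hj]

lemma exists_dual {s q : ℕ} (hq : q.Prime) (hs : 1 ≤ s) (k l : Fin s → ℕ) (hk : ∀ j, 1 ≤ k j)
    (hl : ∀ j, 1 ≤ l j)
    (h : ¬∃ c : ZMod q, c ≠ 0 ∧ ∀ u, ∀ a, digitVec q (l u) a = c * digitVec q (k u) a) :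
    ∃ f, pr q k f = 0 ∧ pr q l f = 1 := by
  haveI := Fact.mk hq
  set u₀ : Fin s := ⟨0, hs⟩
  obtain ⟨j, hj⟩ := exists_digit_ne hq (hk u₀)
  set c := digitVec q (l u₀) j / digitVec q (k u₀) j with hc
  have hne : ∃ u a, digitVec q (l u) a ≠ c * digitVec q (k u) a := by
    by_contra! hcon
    refine h ⟨c, ?_, hcon⟩
    intro hc0
    obtain ⟨j', hj'⟩ := exists_digit_ne hq (hl u₀)
    apply hj'
    rw [hcon, hc0, zero_mul]
  obtain ⟨u, a, hua⟩ := hne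
  set f₀ : Fin s → ℕ → ZMod q :=
    dl u a - (digitVec q (k u) a / digitVec q (k u₀) j) • dl u₀ j with hf₀
  have h1 : pr q k f₀ = 0 := by
    rw [hf₀, map_sub, map_smul, pr_dl hq, pr_dl hq, smul_eq_mul, div_mul_cancel₀ _ hj, sub_self]
  have h2 : pr q l f₀ ≠ 0 := by
    rw [hf₀, map_sub, map_smul, pr_dl hq, pr_dl hq, smul_eq_mul, sub_ne_zero]
    intro h'
    apply hua
    rw [h', hc]
    field_simp
  refine ⟨(pr q l f₀)⁻¹ • f₀, ?_, ?_⟩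
  · rw [map_smul, h1, smul_zero]
  · rw [map_smul, smul_eq_mul, inv_mul_cancel₀ h2]

def Lk {s : ℕ} (q : ℕ) (k : Fin s → ℕ) (m : ℕ) :
    (Fin s → ℕ → ℕ → ZMod q) →+ (Fin m → ZMod q) where
  toFun C := fun i => pr q k (fun u j => C u j i)
  map_zero' := by ext i; exact map_zero (pr q k)
  map_add' C D := by ext i; exact map_add (pr q k) _ _

lemma Lk_supp {s q : ℕ} (k : Fin s → ℕ) (m N M : ℕ) (hN : ∀ u, k u < N) (hM : m ≤ M)
    (C : Fin s → ℕ → ℕ → ZMod q)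
    (hC : ∀ p ∈ (Finset.univ : Finset (Fin s)) ×ˢ Finset.range N ×ˢ Finset.range M,
      C p.1 p.2.1 p.2.2 = 0) : Lk q k m C = 0 := by
  ext i
  simp only [Lk, pr, AddMonoidHom.coe_mk, ZeroHom.coe_mk, LinearMap.coe_mk, AddHom.coe_mk,
    Pi.zero_apply]
  refine Finset.sum_eq_zero fun u _ => Finset.sum_eq_zero fun j hj => ?_
  have := hC (u, j, i) (by
    have := Finset.mem_range.1 hj
    have := hN u
    have := i.2
    simp only [Finset.mem_product, Finset.mem_univ, Finset.mem_range, true_and]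
    omega)
  simp only at this
  rw [this, zero_mul]

def ev {s q : ℕ} (k : Fin s → ℕ) (m : ℕ) : Set (Fin s → ℕ → ℕ → ZMod q) :=
  {C | nuLe (fun i => ∑ u, matVec (transp (C u)) (k u) i) m}

lemma ev_eq {s q : ℕ} (k : Fin s → ℕ) (m : ℕ) :
    (ev k m : Set (Fin s → ℕ → ℕ → ZMod q)) = {C | Lk q k (m - 1) C = 0} := by
  ext C
  constructor
  · intro h; ext i; exact h i i.2
  · intro h i hi; exact congrFun h ⟨i, hi⟩

lemma ev_meas {q s : ℕ} (hq : q.Prime) (hs : 1 ≤ s) (μs : Measure (Fin s → ℕ → ℕ → ZMod q))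
    (hμs : IsUniformMatrixTupleMeasure μs) (k : Fin s → ℕ) (hk : ∀ j, 1 ≤ k j) (m : ℕ) :
    MeasurableSet (ev k m : Set (Fin s → ℕ → ℕ → ZMod q)) ∧
      μs (ev k m) = ((q : ℝ≥0∞) ^ (m - 1))⁻¹ := by
  haveI := Fact.mk hq
  obtain ⟨f, hf⟩ := exists_one hq hs k hk
  have := unif μs hμs.1 hμs.2 (Lk q k (m - 1)) (fun v => by
    refine ⟨fun u j i => if h : i < m - 1 then v ⟨i, h⟩ * f u j else 0, ?_⟩
    ext i
    have : (fun u j => if h : (i : ℕ) < m - 1 then v ⟨i, h⟩ * f u j else 0) = v i • f := by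
      ext u j; simp
    simp only [Lk, AddMonoidHom.coe_mk, ZeroHom.coe_mk]
    rw [this, map_smul, hf, smul_eq_mul, mul_one]) _
    (Lk_supp k (m - 1) (∑ u, k u + 1) (m - 1)
      (fun u => Nat.lt_succ_of_le (Finset.single_le_sum (f := k) (fun _ _ => Nat.zero_le _)
        (Finset.mem_univ u))) le_rfl) 0
  rw [ev_eq]
  refine ⟨this.1, this.2.trans ?_⟩
  simp [ZMod.card]

lemma ev_inter {q s : ℕ} (hq : q.Prime) (hs : 1 ≤ s) (μs : Measure (Fin s → ℕ → ℕ → ZMod q))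
    (hμs : IsUniformMatrixTupleMeasure μs) (k l : Fin s → ℕ) (hk : ∀ j, 1 ≤ k j)
    (hl : ∀ j, 1 ≤ l j) (m n : ℕ)
    (h : ¬∃ c : ZMod q, c ≠ 0 ∧ ∀ u, ∀ a, digitVec q (l u) a = c * digitVec q (k u) a)
    (h' : ¬∃ c : ZMod q, c ≠ 0 ∧ ∀ u, ∀ a, digitVec q (k u) a = c * digitVec q (l u) a) :
    μs (ev k m ∩ ev l n) = μs (ev k m) * μs (ev l n) := by
  haveI := Fact.mk hq
  obtain ⟨g, hg1, hg2⟩ := exists_dual hq hs k l hk hl h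
  obtain ⟨f, hf1, hf2⟩ := exists_dual hq hs l k hl hk h'
  have := unif μs hμs.1 hμs.2 ((Lk q k (m - 1)).prod (Lk q l (n - 1))) (fun ⟨v, w⟩ => by
    refine ⟨fun u j i => (if h : i < m - 1 then v ⟨i, h⟩ else 0) * f u j +
      (if h : i < n - 1 then w ⟨i, h⟩ else 0) * g u j, ?_⟩
    have e : ∀ i : ℕ, (fun u j => (if h : i < m - 1 then v ⟨i, h⟩ else 0) * f u j +
      (if h : i < n - 1 then w ⟨i, h⟩ else 0) * g u j) =
        (if h : i < m - 1 then v ⟨i, h⟩ else 0) • f +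
        (if h : i < n - 1 then w ⟨i, h⟩ else 0) • g := by
      intro i; ext u j; simp only [Pi.add_apply, Pi.smul_apply, smul_eq_mul]
    refine Prod.ext ?_ ?_
    · ext i
      simp only [Lk, AddMonoidHom.prod_apply, AddMonoidHom.coe_mk, ZeroHom.coe_mk]
      rw [e, map_add, map_smul, map_smul, hf2, hg1]
      simp
    · ext i
      simp only [Lk, AddMonoidHom.prod_apply, AddMonoidHom.coe_mk, ZeroHom.coe_mk]
      rw [e, map_add, map_smul, map_smul, hf1, hg2]
      simp) ((Finset.univ : Finset (Fin s)) ×ˢ Finset.range (∑ u, k u + ∑ u, l u + 1) ×ˢ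
        Finset.range (max (m - 1) (n - 1)))
    (fun C hC => by
      refine Prod.ext ?_ ?_
      · refine Lk_supp k (m - 1) _ _ (fun u => ?_) (le_max_left _ _) C hC
        have := Finset.single_le_sum (f := k) (fun _ _ => Nat.zero_le _) (Finset.mem_univ u)
        omega
      · refine Lk_supp l (n - 1) _ _ (fun u => ?_) (le_max_right _ _) C hC
        have := Finset.single_le_sum (f := l) (fun _ _ => Nat.zero_le _) (Finset.mem_univ u)
        omega) 0
  rw [(ev_meas hq hs μs hμs k hk m).2, (ev_meas hq hs μs hμs l hl n).2, ev_eq, ev_eq]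
  have e : {C | Lk q k (m - 1) C = 0} ∩ {C | Lk q l (n - 1) C = 0} =
      {C | ((Lk q k (m - 1)).prod (Lk q l (n - 1))) C = 0} := by
    ext C; simp [Prod.ext_iff]
  rw [e, this.2]
  simp only [Fintype.card_prod, Fintype.card_fun, ZMod.card, Fintype.card_fin]
  push_cast
  rw [ENNReal.mul_inv] <;> simp [hq.ne_zero]

/-- **Lemma 6.**  Let `P ⊆ ℕ^s` contain no two strongly dependent elements and let
`F : ℕ₀^s → ℕ` satisfy `Σ_{(k₁,…,k_s)∈P} q^{−F(len k₁,…,len k_s)} = ∞`.  Then the set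
`M̄` of tuples `(C₁,…,C_s)` with `ν(C₁ᵀk⃗₁ + ⋯ + C_sᵀk⃗_s) ≤ −F(len k₁,…,len k_s)` for
infinitely many `(k₁,…,k_s) ∈ P` has full measure `μ_s(M̄) = 1`. -/
theorem measure_small_nu_infinitely_often_eq_one (q s : ℕ) (hq : q.Prime) (hs : 1 ≤ s)
    (P : Set (Fin s → ℕ)) (hP : ∀ k ∈ P, ∀ j, 1 ≤ k j)
    (hdep : ∀ k ∈ P, ∀ l ∈ P, k ≠ l →
      ¬∃ c : ZMod q, c ≠ 0 ∧ ∀ u, ∀ a, digitVec q (k u) a = c * digitVec q (l u) a)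
    (F : (Fin s → ℕ) → ℕ)
    (hF : ∑' k : P, ((q : ℝ≥0∞) ^ F (fun j => len q ((k : Fin s → ℕ) j)))⁻¹ = ⊤)
    (μs : Measure (Fin s → ℕ → ℕ → ZMod q)) (hμs : IsUniformMatrixTupleMeasure μs) :
    μs {C : Fin s → ℕ → ℕ → ZMod q |
        {k : Fin s → ℕ | k ∈ P ∧
          nuLe (fun i => ∑ u, matVec (transp (C u)) (k u) i)
            (F (fun j => len q (k j)))}.Infinite}
      = 1 := by
  haveI := hμs.1
  have hae := bc μs (fun k : P => ev (k : Fin s → ℕ) (F (fun j => len q ((k : Fin s → ℕ) j))))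
    (fun k => (ev_meas hq hs μs hμs _ (hP k k.2) _).1)
    (fun k l hkl => ev_inter hq hs μs hμs _ _ (hP k k.2) (hP l l.2) _ _
      (hdep l l.2 k k.2 (fun h => hkl (Subtype.ext h.symm)))
      (hdep k k.2 l l.2 (fun h => hkl (Subtype.ext h))))
    (by
      rw [← top_le_iff, ← hF]
      refine ENNReal.tsum_le_tsum fun k => ?_
      rw [(ev_meas hq hs μs hμs _ (hP k k.2) _).2, ENNReal.inv_le_inv]
      exact pow_le_pow_right₀ (by exact_mod_cast hq.one_lt.le) (Nat.sub_le _ _))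
  rw [← measure_univ (μ := μs)]
  refine measure_congr (ae_eq_univ.2 ?_)
  refine measure_mono_null ?_ (ae_iff.1 hae)
  intro C hC hinf
  apply hC
  refine (hinf.image (f := Subtype.val) Subtype.val_injective.injOn).mono ?_
  rintro _ ⟨k, hk, rfl⟩
  exact ⟨k.2, hk⟩
end
end
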